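/- The minimum-distance spectrum of the 9×9 matrix T₃ ⊗ T₃ is (9,6,4,4,3,2,2,2,1); that is, S_{T₃⊗T₃}(1) = 9, S_{T₃⊗T₃}(2) = 6, S_{T₃⊗T₃}(3) = 4, S_{T₃⊗T₃}(4) = 4, S_{T₃⊗T₃}(5) = 3, S_{T₃⊗T₃}(6) = 2, S_{T₃⊗T₃}(7) = 2, S_{T₃⊗T₃}(8) = 2, and S_{T₃⊗T₃}(9) = 1. -/

import Mathlib

open Matrix

noncomputable section

abbrev F2 : Type := ZMod 2

/-- The Arikan kernel `T₂ = ((1,0),(1,1))` over `F₂`. -/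
def T2 : Matrix (Fin 2) (Fin 2) F2 := !![1, 0; 1, 1]

/-- Kronecker product of `Fin`-indexed square matrices, with the standard index
convention `(A ⊗ B) i j = A (i / n) (j / n) * B (i % n) (j % n)`. -/
def kron {m n : ℕ} (A : Matrix (Fin m) (Fin m) F2) (B : Matrix (Fin n) (Fin n) F2) :
    Matrix (Fin (m * n)) (Fin (m * n)) F2 :=
  fun i j => A i.divNat j.divNat * B i.modNat j.modNat

/-- The `n`-fold Kronecker power of `T₂` (with `T₂^{⊗0}` the 1×1 identity). -/
def T2pow : (n : ℕ) → Matrix (Fin (2 ^ n)) (Fin (2 ^ n)) F2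
  | 0 => 1
  | n + 1 => (kron T2 (T2pow n)).submatrix
      (Fin.cast (by rw [pow_succ, Nat.mul_comm]))
      (Fin.cast (by rw [pow_succ, Nat.mul_comm]))

/-- Minimum distance `d_G(I)`: the minimum Hamming weight of `u · G` over all
nonzero row vectors `u` with support contained in `I`. -/
def minDist {N : ℕ} (G : Matrix (Fin N) (Fin N) F2) (I : Finset (Fin N)) : ℕ :=
  sInf {w | ∃ u : Fin N → F2, u ≠ 0 ∧ (∀ i, u i ≠ 0 → i ∈ I) ∧
    hammingNorm (Matrix.vecMul u G) = w}

/-- Minimum-distance spectrum `S_G(K)`: the maximum of `d_G(I)` over all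
row-index sets `I` of size `K`. -/
def spec {N : ℕ} (G : Matrix (Fin N) (Fin N) F2) (K : ℕ) : ℕ :=
  sSup {d | ∃ I : Finset (Fin N), I.card = K ∧ minDist G I = d}

/-- `K`-th largest element (1-indexed, counted with multiplicity) of a
multiset of natural numbers. -/
def kthLargest (s : Multiset ℕ) (K : ℕ) : ℕ :=
  ((s.sort (· ≤ ·)).reverse).getD (K - 1) 0

/-- The kernel `T₃` from the paper. -/
def T3 : Matrix (Fin 3) (Fin 3) F2 := !![1, 1, 1; 1, 0, 1; 0, 1, 1]


/-- The vector over `F₂` with support `s`. -/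
def indicatorVec {N : ℕ} (s : Finset (Fin N)) : Fin N → F2 := fun i => if i ∈ s then 1 else 0

theorem minDist_le {N : ℕ} {G : Matrix (Fin N) (Fin N) F2} {I s : Finset (Fin N)}
    (hs : s.Nonempty) (hsI : s ⊆ I) :
    minDist G I ≤ hammingNorm (Matrix.vecMul (indicatorVec s) G) := by
  obtain ⟨i, hi⟩ := hs
  refine Nat.sInf_le ⟨indicatorVec s, fun h => ?_, fun j hj => hsI ?_, rfl⟩
  · simpa [indicatorVec, hi] using congrFun h i
  · simpa [indicatorVec] using hj

theorem le_minDist {N : ℕ} {G : Matrix (Fin N) (Fin N) F2} {I : Finset (Fin N)} {d : ℕ}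
    (hI : I.Nonempty)
    (h : ∀ u : Fin N → F2, u ≠ 0 → (∀ i, u i ≠ 0 → i ∈ I) → d ≤ hammingNorm (Matrix.vecMul u G)) :
    d ≤ minDist G I := by
  obtain ⟨i, hi⟩ := hI
  refine le_csInf ⟨_, Pi.single i 1, by simp, fun j hj => ?_, rfl⟩ ?_
  · obtain rfl : j = i := by
      by_contra hne
      simp [hne] at hj
    exact hi
  · rintro _ ⟨u, hu, huI, rfl⟩
    exact h u hu huI

theorem le_spec {N : ℕ} {G : Matrix (Fin N) (Fin N) F2} {K d : ℕ} (I : Finset (Fin N))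
    (hK : 0 < K) (hI : K ≤ I.card)
    (h : ∀ u : Fin N → F2, u ≠ 0 → (∀ i, u i ≠ 0 → i ∈ I) → d ≤ hammingNorm (Matrix.vecMul u G)) :
    d ≤ spec G K := by
  obtain ⟨J, hJI, hJ⟩ := Finset.exists_subset_card_eq hI
  have hbdd : BddAbove {d | ∃ I : Finset (Fin N), I.card = K ∧ minDist G I = d} := by
    refine ((Set.finite_range (minDist G)).subset ?_).bddAbove
    rintro _ ⟨I, -, rfl⟩
    exact ⟨I, rfl⟩
  refine (le_minDist (Finset.card_pos.mp (hJ ▸ hK)) fun u hu huJ => ?_).trans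
    (le_csSup hbdd ⟨J, hJ, rfl⟩)
  exact h u hu fun i hi => hJI (huJ i hi)

/-- A family `L` of nonempty row sets with sums of weight at most `d` bounds `spec G K` as soon as
every index set of size `k ≤ K` (given by its indicator function) contains a member of `L`. -/
theorem spec_le {N : ℕ} {G : Matrix (Fin N) (Fin N) F2} {k K d : ℕ} (L : List (Finset (Fin N)))
    (hL : ∀ s ∈ L, s.Nonempty ∧ hammingNorm (Matrix.vecMul (indicatorVec s) G) ≤ d)
    (hcover : ∀ J : Fin N → Bool, (Finset.univ.filter fun i => J i = true).card = k →
      ∃ s ∈ L, ∀ i ∈ s, J i = true)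
    (hk : k ≤ K) : spec G K ≤ d := by
  refine csSup_le' ?_
  rintro _ ⟨I, hI, rfl⟩
  obtain ⟨J, hJI, hJ⟩ := Finset.exists_subset_card_eq (hk.trans_eq hI.symm)
  obtain ⟨s, hs, hsJ⟩ := hcover (fun i => decide (i ∈ J)) (by simpa using hJ)
  exact (minDist_le (hL s hs).1 fun i hi => hJI (by simpa using hsJ i hi)).trans (hL s hs).2

theorem natCast_hammingNorm {N : ℕ} (c : Fin N → F2) : (hammingNorm c : F2) = ∑ j, c j := by
  have h : ∀ a : F2, (if a = 0 then 0 else 1) = a := by decide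
  simp [hammingNorm, Finset.card_filter, h]

theorem vecMul_kron_T3_T3_ne_zero {u : Fin 9 → F2} (hu : u ≠ 0) :
    Matrix.vecMul u (kron T3 T3) ≠ 0 := by
  have hinv : kron T3 T3 *
      kron !![1, 0, 1; 1, 1, 0; 1, 1, 1] !![1, 0, 1; 1, 1, 0; 1, 1, 1] = 1 := by decide +kernel
  intro h
  apply hu
  rw [← Matrix.vecMul_one u, ← hinv]
  exact (Matrix.vecMul_vecMul u _ _).symm.trans (by rw [h, Matrix.zero_vecMul])

/-- All rows of `T₃ ⊗ T₃` other than the first have even weight. -/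
theorem two_le_hammingNorm_vecMul_kron_T3_T3 {u : Fin 9 → F2} (hu : u ≠ 0) (h0 : u 0 = 0) :
    2 ≤ hammingNorm (Matrix.vecMul u (kron T3 T3)) := by
  have hrow : Matrix.mulVec (kron T3 T3) 1 = Pi.single 0 1 := by decide +kernel
  have hsum : ∑ j, Matrix.vecMul u (kron T3 T3) j = 0 := by
    rw [← dotProduct_one]
    refine (Matrix.dotProduct_mulVec u (kron T3 T3) 1).symm.trans ?_
    rw [hrow]
    exact (dotProduct_single_one u 0).trans h0
  have hpos := hammingNorm_pos_iff.mpr (vecMul_kron_T3_T3_ne_zero hu)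
  have hne : hammingNorm (Matrix.vecMul u (kron T3 T3)) ≠ 1 := fun h => by
    have hcast := natCast_hammingNorm (Matrix.vecMul u (kron T3 T3))
    rw [h] at hcast
    exact one_ne_zero (Nat.cast_one.symm.trans (hcast.trans hsum))
  exact Nat.lt_of_le_of_ne hpos (Ne.symm hne)

theorem spec_kron_T3_T3_le_nine {K : ℕ} (hK : 1 ≤ K) : spec (kron T3 T3) K ≤ 9 :=
  spec_le [{0}, {1}, {2}, {3}, {4}, {5}, {6}, {7}, {8}]
    (by decide +kernel) (by decide +kernel) hK

theorem nine_le_spec_kron_T3_T3 {K : ℕ} (hK : 0 < K) (hK1 : K ≤ 1) :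
    9 ≤ spec (kron T3 T3) K :=
  le_spec {0} hK hK1 (by decide +kernel)

theorem spec_kron_T3_T3_le_six {K : ℕ} (hK : 2 ≤ K) : spec (kron T3 T3) K ≤ 6 :=
  spec_le [{1}, {2}, {3}, {4}, {5}, {6}, {7}, {8}]
    (by decide +kernel) (by decide +kernel) hK

theorem six_le_spec_kron_T3_T3 {K : ℕ} (hK : 0 < K) (hK2 : K ≤ 2) :
    6 ≤ spec (kron T3 T3) K :=
  le_spec {3, 6} hK hK2 (by decide +kernel)

theorem spec_kron_T3_T3_le_four {K : ℕ} (hK : 3 ≤ K) : spec (kron T3 T3) K ≤ 4 :=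
  spec_le [{4}, {5}, {7}, {8}, {0, 1}, {2, 3}, {0, 6}, {1, 6}]
    (by decide +kernel) (by decide +kernel) hK

theorem four_le_spec_kron_T3_T3 {K : ℕ} (hK : 0 < K) (hK4 : K ≤ 4) :
    4 ≤ spec (kron T3 T3) K :=
  le_spec {4, 5, 7, 8} hK hK4 (by decide +kernel)

theorem spec_kron_T3_T3_le_three {K : ℕ} (hK : 5 ≤ K) : spec (kron T3 T3) K ≤ 3 :=
  spec_le [{0, 1}, {3, 4}, {2, 5}, {6, 7}, {2, 8}, {3, 5}, {1, 4}, {0, 4, 8}]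
    (by decide +kernel) (by decide +kernel) hK

theorem three_le_spec_kron_T3_T3 {K : ℕ} (hK : 0 < K) (hK5 : K ≤ 5) :
    3 ≤ spec (kron T3 T3) K :=
  le_spec {0, 4, 5, 7, 8} hK hK5 (by decide +kernel)

theorem spec_kron_T3_T3_le_two {K : ℕ} (hK : 6 ≤ K) : spec (kron T3 T3) K ≤ 2 :=
  spec_le [{1, 4}, {2, 5}, {6, 7}, {3, 4}, {3, 5}, {2, 8}]
    (by decide +kernel) (by decide +kernel) hK

theorem two_le_spec_kron_T3_T3 {K : ℕ} (hK : 0 < K) (hK8 : K ≤ 8) :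
    2 ≤ spec (kron T3 T3) K :=
  le_spec {1, 2, 3, 4, 5, 6, 7, 8} hK hK8 fun _ hu h => two_le_hammingNorm_vecMul_kron_T3_T3 hu
    (by_contra fun h0 => absurd (h 0 h0) (by decide))

theorem spec_kron_T3_T3_le_one {K : ℕ} (hK : 9 ≤ K) : spec (kron T3 T3) K ≤ 1 :=
  spec_le [{0, 1, 3, 4}]
    (by decide +kernel) (by decide +kernel) hK

theorem one_le_spec_kron_T3_T3 {K : ℕ} (hK : 0 < K) (hK9 : K ≤ 9) :
    1 ≤ spec (kron T3 T3) K :=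
  le_spec Finset.univ hK hK9 fun _ hu _ =>
    hammingNorm_pos_iff.mpr (vecMul_kron_T3_T3_ne_zero hu)

theorem spectrum_T3_kron_T3 :
    spec (kron T3 T3) 1 = 9 ∧ spec (kron T3 T3) 2 = 6 ∧ spec (kron T3 T3) 3 = 4 ∧
    spec (kron T3 T3) 4 = 4 ∧ spec (kron T3 T3) 5 = 3 ∧ spec (kron T3 T3) 6 = 2 ∧
    spec (kron T3 T3) 7 = 2 ∧ spec (kron T3 T3) 8 = 2 ∧ spec (kron T3 T3) 9 = 1 := by
  refine ⟨(spec_kron_T3_T3_le_nine ?_).antisymm (nine_le_spec_kron_T3_T3 ?_ ?_),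
    (spec_kron_T3_T3_le_six ?_).antisymm (six_le_spec_kron_T3_T3 ?_ ?_),
    (spec_kron_T3_T3_le_four ?_).antisymm (four_le_spec_kron_T3_T3 ?_ ?_),
    (spec_kron_T3_T3_le_four ?_).antisymm (four_le_spec_kron_T3_T3 ?_ ?_),
    (spec_kron_T3_T3_le_three ?_).antisymm (three_le_spec_kron_T3_T3 ?_ ?_),
    (spec_kron_T3_T3_le_two ?_).antisymm (two_le_spec_kron_T3_T3 ?_ ?_),
    (spec_kron_T3_T3_le_two ?_).antisymm (two_le_spec_kron_T3_T3 ?_ ?_),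
    (spec_kron_T3_T3_le_two ?_).antisymm (two_le_spec_kron_T3_T3 ?_ ?_),
    (spec_kron_T3_T3_le_one ?_).antisymm (one_le_spec_kron_T3_T3 ?_ ?_)⟩ <;> norm_num
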